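/- One-step expectation bound for Quantile-RaSK with exact step (Theorem 3.2(b)): under the same setup and hypotheses as Theorem 3.2(a) — A ∈ ℝ^{m×n} full rank with unit-norm rows, b = A x̂ + b^c + r with exactly βm corruptions, β < q < 1 − β, condition (♦), x ∈ ℝ^n with x* ∈ ∂f(x) ∩ Range(Aᵀ), Q the q-quantile of residuals, N₂ = {i : |⟨a_i, x⟩ − b_i| ≤ Q} with |N₂| = qm — define for i ∈ N₂ the exact-step update: t_i a minimizer of t ↦ f*(x* − t·a_i) + t·b_i, x_i'* = x* − t_i·a_i, and x_i' such that x_i'* ∈ ∂f(x_i'). Then (1/(qm))·Σ_{i ∈ N₂} D_f^{x_i'*}(x_i', x̂) ≤ (1 − C₁)·D_f^{x*}(x, x̂) + C₂·‖r‖_∞² + (2/√(qm))·‖r‖_∞·‖A‖_{1,2} + (2λ/(qm))·‖b − A x̂‖·‖A‖_{1,2}, with C₁, C₂ as in Theorem 3.2(a) and ‖A‖_{1,2} = (Σ_{i=1}^m ‖a_i‖₁²)^{1/2}. -/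

import Mathlib

/-- Euclidean inner product on finite-dimensional real coordinate space. -/
noncomputable def ip {I : Type*} [Fintype I] (u v : I → ℝ) : ℝ := ∑ i, u i * v i

/-- Euclidean norm. -/
noncomputable def enorm2 {I : Type*} [Fintype I] (v : I → ℝ) : ℝ :=
  Real.sqrt (∑ i, (v i) ^ 2)

/-- ℓ₁ norm. -/
noncomputable def norm1 {I : Type*} [Fintype I] (v : I → ℝ) : ℝ := ∑ i, |v i|

/-- ℓ∞ norm. -/
noncomputable def normInf {I : Type*} [Fintype I] (v : I → ℝ) : ℝ := ⨆ i, |v i|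

/-- Subdifferential of a convex function. -/
def subdiff {I : Type*} [Fintype I] (f : (I → ℝ) → ℝ) (x : I → ℝ) : Set (I → ℝ) :=
  {g | ∀ y, f y ≥ f x + ip g (y - x)}

/-- Bregman distance `D_f^{g}(x, y)` with respect to `f` and subgradient `g ∈ ∂f(x)`. -/
noncomputable def breg {I : Type*} [Fintype I] (f : (I → ℝ) → ℝ) (g x y : I → ℝ) : ℝ :=
  f y - f x - ip g (y - x)

/-- Fenchel conjugate. -/
noncomputable def fconj {I : Type*} [Fintype I] (f : (I → ℝ) → ℝ) (u : I → ℝ) : ℝ :=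
  ⨆ z, (ip u z - f z)

/-- Soft shrinkage (soft thresholding) operator. -/
noncomputable def softShrink {I : Type*} [Fintype I] (lam : ℝ) (x : I → ℝ) : I → ℝ :=
  fun i => Real.sign (x i) * max (|x i| - lam) 0

/-- Smallest singular value `σ_min(M) = inf_{x ≠ 0} ‖Mx‖/‖x‖`. -/
noncomputable def sigmaMin {I J : Type*} [Fintype I] [Fintype J] (M : Matrix I J ℝ) : ℝ :=
  sInf {r | ∃ x : J → ℝ, x ≠ 0 ∧ r = enorm2 (M.mulVec x) / enorm2 x}

/-- Largest singular value `σ_max(M) = sup_{x ≠ 0} ‖Mx‖/‖x‖`. -/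
noncomputable def sigmaMax {I J : Type*} [Fintype I] [Fintype J] (M : Matrix I J ℝ) : ℝ :=
  sSup {r | ∃ x : J → ℝ, x ≠ 0 ∧ r = enorm2 (M.mulVec x) / enorm2 x}

/-- Frobenius norm. -/
noncomputable def frobNorm {I J : Type*} [Fintype I] [Fintype J] (M : Matrix I J ℝ) : ℝ :=
  Real.sqrt (∑ i, ∑ j, (M i j) ^ 2)

/-- `‖A‖_{1,2} = sqrt (∑ i ‖a_i‖₁²)` where `a_iᵀ` are the rows of `A`. -/
noncomputable def norm12 {m n : ℕ} (A : Matrix (Fin m) (Fin n) ℝ) : ℝ :=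
  Real.sqrt (∑ i, (norm1 (A i)) ^ 2)

/-- Column submatrix `A_J`. -/
noncomputable def colSub {m n : ℕ} (A : Matrix (Fin m) (Fin n) ℝ) (J : Finset (Fin n)) :
    Matrix (Fin m) {j // j ∈ J} ℝ := A.submatrix id Subtype.val

/-- Row submatrix `A_I`. -/
noncomputable def rowSub {m n : ℕ} (A : Matrix (Fin m) (Fin n) ℝ) (I : Finset (Fin m)) :
    Matrix {i // i ∈ I} (Fin n) ℝ := A.submatrix Subtype.val id

/-- Submatrix `A_{I,J}` with rows in `I` and columns in `J`. -/
noncomputable def subMat {m n : ℕ} (A : Matrix (Fin m) (Fin n) ℝ)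
    (I : Finset (Fin m)) (J : Finset (Fin n)) :
    Matrix {i // i ∈ I} {j // j ∈ J} ℝ := A.submatrix Subtype.val Subtype.val

/-- `σ̃_min(A) = min{σ_min(A_J) : J ⊆ {1,…,n}, A_J ≠ 0}`. -/
noncomputable def sigmaTildeMin {m n : ℕ} (A : Matrix (Fin m) (Fin n) ℝ) : ℝ :=
  sInf {r | ∃ J : Finset (Fin n), colSub A J ≠ 0 ∧ r = sigmaMin (colSub A J)}

/-- `σ̃_{q−β,min}(A)` (with `k = (q−β)m`): min of `σ_min(A_{I,J})` over `|I| = k` and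
`J` nonempty. -/
noncomputable def sigmaTildeQBMin {m n : ℕ} (A : Matrix (Fin m) (Fin n) ℝ) (k : ℕ) : ℝ :=
  sInf {r | ∃ (I : Finset (Fin m)) (J : Finset (Fin n)),
    I.card = k ∧ J.Nonempty ∧ r = sigmaMin (subMat A I J)}

/-- Variant of `σ̃_{q−β,min}(A)` requiring moreover `A_J ≠ 0`. -/
noncomputable def sigmaTildeQBMin' {m n : ℕ} (A : Matrix (Fin m) (Fin n) ℝ) (k : ℕ) : ℝ :=
  sInf {r | ∃ (I : Finset (Fin m)) (J : Finset (Fin n)),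
    I.card = k ∧ J.Nonempty ∧ colSub A J ≠ 0 ∧ r = sigmaMin (subMat A I J)}

/-- `σ_{q−β,min}(A)` (with `k = (q−β)m`): min of `σ_min(A_I)` over `|I| = k`. -/
noncomputable def sigmaQBMin {m n : ℕ} (A : Matrix (Fin m) (Fin n) ℝ) (k : ℕ) : ℝ :=
  sInf {r | ∃ I : Finset (Fin m), I.card = k ∧ r = sigmaMin (rowSub A I)}

/-- The increasingly sorted rearrangement `y_(1) ≤ … ≤ y_(m)` of a finite tuple. -/
noncomputable def sortedVal {m : ℕ} (y : Fin m → ℝ) : Fin m → ℝ := y ∘ Tuple.sort y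

/-- The `q`-quantile of `y_1, …, y_m` in the case where `qm = k` is an integer:
`(y_(k) + y_(k+1))/2` (1-indexed). -/
noncomputable def quantileAt {m : ℕ} (k : ℕ) (y : Fin m → ℝ) : ℝ :=
  if h : 0 < k ∧ k < m then
    (sortedVal y ⟨k - 1, by omega⟩ + sortedVal y ⟨k, h.2⟩) / 2
  else 0

/-- `|x̂|_min = min{|x̂_j| : x̂_j ≠ 0}`. -/
noncomputable def xminOf {n : ℕ} (xhat : Fin n → ℝ) : ℝ :=
  sInf {r | ∃ j, xhat j ≠ 0 ∧ r = |xhat j|}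

theorem h_scalar (lam x g : ℝ)
    (h : ∀ v : ℝ, lam * |v| + 1/2 * v^2 ≥ lam * |x| + 1/2 * x^2 + g * (v - x)) (hlam : 0 < lam) :
    |g - x| ≤ lam ∧ (g - x) * x = lam * |x| := by
  have key : ∀ δ : ℝ, (g - x) * δ ≤ lam * |x + δ| - lam * |x| := by
    intro δ
    by_contra hc
    push Not at hc
    set E := (g - x) * δ - (lam * |x + δ| - lam * |x|) with hE
    have hEpos : 0 < E := by linarith
    have hall : ∀ τ : ℝ, 0 < τ → τ ≤ 1 → E ≤ 1/2 * τ * δ^2 := by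
      intro τ h0 h1
      have h2 := h (x + τ * δ)
      have h3 : |x + τ * δ| ≤ (1 - τ) * |x| + τ * |x + δ| := by
        have : x + τ * δ = (1 - τ) * x + τ * (x + δ) := by ring
        rw [this]
        refine (abs_add_le _ _).trans ?_
        rw [abs_mul, abs_mul, abs_of_nonneg (by linarith : 0 ≤ 1 - τ), abs_of_pos h0]
      have h4 := mul_le_mul_of_nonneg_left h3 hlam.le
      have h5 : τ * E ≤ τ * (1/2 * τ * δ^2) := by rw [hE]; nlinarith
      exact le_of_mul_le_mul_left h5 h0
    have h1 := hall 1 one_pos le_rfl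
    have hd : 0 < δ^2 := by nlinarith
    have h2 := hall (E / δ^2) (by positivity) (by rw [div_le_one hd]; linarith)
    have : 1/2 * (E / δ^2) * δ^2 = 1/2 * E := by rw [mul_assoc, div_mul_cancel₀ _ hd.ne']
    linarith
  have k1 := key 1
  have k2 := key (-1)
  have k3 := key x
  have k4 := key (-x)
  have a1 : |x + 1| ≤ |x| + 1 := by simpa using abs_add_le x 1
  have a2 : |x + -1| ≤ |x| + 1 := by simpa using abs_add_le x (-1)
  have a3 : |x + x| ≤ |x| + |x| := abs_add_le x x
  have a4 : |x + -x| = 0 := by simp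
  rw [a4] at k4
  have := mul_le_mul_of_nonneg_left a1 hlam.le
  have := mul_le_mul_of_nonneg_left a2 hlam.le
  have := mul_le_mul_of_nonneg_left a3 hlam.le
  refine ⟨abs_le.mpr ⟨by linarith, by linarith⟩, by linarith⟩

theorem h_enorm_sq {I : Type*} [Fintype I] (v : I → ℝ) : enorm2 v ^ 2 = ∑ i, v i ^ 2 := by
  unfold enorm2
  exact Real.sq_sqrt (Finset.sum_nonneg fun i _ => sq_nonneg _)

theorem h_f {n : ℕ} (lam : ℝ) (f : (Fin n → ℝ) → ℝ)
    (hf : f = fun x => lam * norm1 x + (1 / 2) * enorm2 x ^ 2) (x : Fin n → ℝ) :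
    f x = ∑ j, (lam * |x j| + 1/2 * x j ^ 2) := by
  rw [hf]
  simp only [h_enorm_sq, norm1, Finset.mul_sum, Finset.sum_add_distrib]

theorem h_sub {n : ℕ} (lam : ℝ) (hlam : 0 < lam) (f : (Fin n → ℝ) → ℝ)
    (hf : f = fun x => lam * norm1 x + (1 / 2) * enorm2 x ^ 2) (x g : Fin n → ℝ)
    (hg : g ∈ subdiff f x) (j : Fin n) :
    |g j - x j| ≤ lam ∧ (g j - x j) * x j = lam * |x j| := by
  apply h_scalar _ _ _ _ hlam
  intro v
  have h := hg (Function.update x j v)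
  rw [h_f lam f hf, h_f lam f hf] at h
  have e1 : ip g (Function.update x j v - x) = g j * (v - x j) := by
    unfold ip
    rw [Finset.sum_eq_single j]
    · simp
    · intro k _ hk; simp [Function.update_of_ne hk]
    · simp
  rw [e1, ← Finset.add_sum_erase _ _ (Finset.mem_univ j),
    ← Finset.add_sum_erase _ _ (Finset.mem_univ j)] at h
  have e2 : ∑ k ∈ Finset.univ.erase j, (lam * |Function.update x j v k| + 1/2 * Function.update x j v k ^ 2)
      = ∑ k ∈ Finset.univ.erase j, (lam * |x k| + 1/2 * x k ^ 2) := by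
    apply Finset.sum_congr rfl
    intro k hk
    rw [Function.update_of_ne (Finset.ne_of_mem_erase hk)]
  rw [e2] at h
  simp only [Function.update_self] at h
  linarith

theorem h_breg {n : ℕ} (lam : ℝ) (hlam : 0 < lam) (f : (Fin n → ℝ) → ℝ)
    (hf : f = fun x => lam * norm1 x + (1 / 2) * enorm2 x ^ 2) (x g y : Fin n → ℝ)
    (hg : g ∈ subdiff f x) :
    breg f g x y = ∑ j, (lam * |y j| - (g j - x j) * y j + 1/2 * (x j - y j)^2) := by
  unfold breg ip
  rw [h_f lam f hf, h_f lam f hf, ← Finset.sum_sub_distrib, ← Finset.sum_sub_distrib]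
  apply Finset.sum_congr rfl
  intro j _
  have := (h_sub lam hlam f hf x g hg j).2
  simp only [Pi.sub_apply]
  linarith

theorem h_nonneg (lam w y : ℝ) (h : |w| ≤ lam) : 0 ≤ lam * |y| - w * y := by
  have h1 : w * y ≤ |w| * |y| := by rw [← abs_mul]; exact le_abs_self _
  have h2 := mul_le_mul_of_nonneg_right h (abs_nonneg y)
  linarith

theorem h_breg_lower {n : ℕ} (lam : ℝ) (hlam : 0 < lam) (f : (Fin n → ℝ) → ℝ)
    (hf : f = fun x => lam * norm1 x + (1 / 2) * enorm2 x ^ 2) (x g y : Fin n → ℝ)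
    (hg : g ∈ subdiff f x) :
    1/2 * ∑ j, (x j - y j)^2 ≤ breg f g x y := by
  rw [h_breg lam hlam f hf x g y hg, Finset.mul_sum]
  apply Finset.sum_le_sum
  intro j _
  have := h_nonneg lam _ (y j) (h_sub lam hlam f hf x g hg j).1
  linarith

theorem h_xmin {n : ℕ} (xh : Fin n → ℝ) (h : xh ≠ 0) :
    0 < xminOf xh ∧ ∀ j, xh j ≠ 0 → xminOf xh ≤ |xh j| := by
  have hset : {r | ∃ j, xh j ≠ 0 ∧ r = |xh j|} = (fun j => |xh j|) '' {j | xh j ≠ 0} := by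
    ext r; simp [eq_comm]
  have hfin : {r | ∃ j, xh j ≠ 0 ∧ r = |xh j|}.Finite := by
    rw [hset]; exact (Set.toFinite _).image _
  have hne : {r | ∃ j, xh j ≠ 0 ∧ r = |xh j|}.Nonempty := by
    obtain ⟨j, hj⟩ := Function.ne_iff.mp h
    exact ⟨_, j, hj, rfl⟩
  constructor
  · obtain ⟨j, hj, e⟩ := hne.csInf_mem hfin
    unfold xminOf
    rw [e]; exact abs_pos.mpr hj
  · intro j hj
    exact csInf_le hfin.bddBelow ⟨j, hj, rfl⟩

theorem h_err_scalar (lam μ x y w : ℝ) (hlam : 0 < lam) (hμ : 0 < μ) (hy : y ≠ 0 → μ ≤ |y|)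
    (h1 : |w| ≤ lam) (h2 : w * x = lam * |x|) :
    μ * (lam * |y| - w * y + 1/2 * (x - y)^2) ≤ (μ + 2 * lam) * (x - y)^2 := by
  suffices h : μ * (lam * |y| - w * y) ≤ 2 * lam * (x - y)^2 by nlinarith [sq_nonneg (x - y)]
  by_cases hy0 : y = 0
  · subst hy0; simp; positivity
  have hμy := hy hy0
  by_cases hxy : 0 < x * y
  · have : lam * |y| - w * y = 0 := by
      rcases pos_and_pos_or_neg_and_neg_of_mul_pos hxy with ⟨hx, hy⟩ | ⟨hx, hy⟩
      · rw [abs_of_pos hx] at h2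
        rw [abs_of_pos hy, mul_right_cancel₀ hx.ne' h2]; ring
      · rw [abs_of_neg hx] at h2
        have : w = -lam := mul_right_cancel₀ hx.ne (by linarith)
        rw [abs_of_neg hy, this]; ring
    rw [this]; simp; positivity
  · have a1 : |y|^2 ≤ (x - y)^2 := by rw [sq_abs]; nlinarith [sq_nonneg x]
    have a2 : lam * |y| - w * y ≤ 2 * lam * |y| := by
      have := h_nonneg lam (-w) y (by rwa [abs_neg])
      linarith
    have a3 : μ * (lam * |y| - w * y) ≤ |y| * (2 * lam * |y|) :=
      (mul_le_mul_of_nonneg_left a2 hμ.le).trans (mul_le_mul_of_nonneg_right hμy (by positivity))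
    nlinarith

theorem h_err {n : ℕ} (lam : ℝ) (hlam : 0 < lam) (f : (Fin n → ℝ) → ℝ)
    (hf : f = fun x => lam * norm1 x + (1 / 2) * enorm2 x ^ 2) (x g y : Fin n → ℝ)
    (hg : g ∈ subdiff f x) (hy : y ≠ 0) :
    xminOf y / (xminOf y + 2 * lam) * breg f g x y ≤ ∑ j, (x j - y j)^2 := by
  obtain ⟨hμ, hμj⟩ := h_xmin y hy
  rw [div_mul_eq_mul_div, div_le_iff₀ (by positivity), h_breg lam hlam f hf x g y hg,
    Finset.mul_sum, Finset.sum_mul]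
  apply Finset.sum_le_sum
  intro j _
  have h := h_sub lam hlam f hf x g hg j
  have := h_err_scalar lam _ (x j) (y j) _ hlam hμ (hμj j) h.1 h.2
  linarith

theorem h_fconj_le {n : ℕ} (lam : ℝ) (hlam : 0 < lam) (f : (Fin n → ℝ) → ℝ)
    (hf : f = fun x => lam * norm1 x + (1 / 2) * enorm2 x ^ 2) (x g v : Fin n → ℝ)
    (hg : g ∈ subdiff f x) :
    fconj f (g + v) ≤ ip g x - f x + ip v x + 1/2 * ∑ j, v j ^ 2 := by
  unfold fconj
  apply ciSup_le
  intro z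
  have h := h_breg_lower lam hlam f hf x g z hg
  have h2 : ip v z ≤ ip v x + 1/2 * ∑ j, v j^2 + 1/2 * ∑ j, (x j - z j)^2 := by
    unfold ip
    rw [Finset.mul_sum, Finset.mul_sum, ← Finset.sum_add_distrib, ← Finset.sum_add_distrib]
    apply Finset.sum_le_sum
    intro j _
    nlinarith [sq_nonneg (v j + x j - z j)]
  have e1 : ip (g + v) z = ip g z + ip v z := add_dotProduct g v z
  have e2 : ip g (z - x) = ip g z - ip g x := dotProduct_sub g z x
  unfold breg at h
  linarith

theorem h_fconj_eq {n : ℕ} (f : (Fin n → ℝ) → ℝ) (x g : Fin n → ℝ)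
    (hg : g ∈ subdiff f x) : fconj f g = ip g x - f x := by
  have hb : ∀ z, ip g z - f z ≤ ip g x - f x := by
    intro z
    have h := hg z
    have e2 : ip g (z - x) = ip g z - ip g x := dotProduct_sub g z x
    linarith
  unfold fconj
  exact le_antisymm (ciSup_le hb) (le_ciSup (f := fun z => ip g z - f z) ⟨_, by rintro _ ⟨z, rfl⟩; exact hb z⟩ x)

/-- one exact step compared with the inexact step -/
theorem h_step {n : ℕ} (lam : ℝ) (hlam : 0 < lam) (f : (Fin n → ℝ) → ℝ)
    (hf : f = fun x => lam * norm1 x + (1 / 2) * enorm2 x ^ 2) (x g a g' x' y : Fin n → ℝ)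
    (t b : ℝ) (hg : g ∈ subdiff f x) (ha : enorm2 a = 1)
    (ht : ∀ s : ℝ, fconj f (g - t • a) + t * b ≤ fconj f (g - s • a) + s * b)
    (hg' : g' = g - t • a) (hx' : g' ∈ subdiff f x') :
    breg f g' x' y ≤ breg f g x y - (ip a x - b) * (ip a x - ip a y) + 1/2 * (ip a x - b)^2
      + 2 * lam * norm1 a * |b - ip a y| := by
  have haa : ∑ j, a j ^ 2 = 1 := by rw [← h_enorm_sq, ha]; norm_num
  have hsum : ∀ s : ℝ, ∑ j, ((-s) • a) j ^ 2 = s^2 := by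
    intro s
    simp only [Pi.smul_apply, smul_eq_mul, mul_pow, ← Finset.mul_sum, haa]; ring
  have hipn : ∀ (s : ℝ) z, ip ((-s) • a) z = -s * ip a z := fun s z => smul_dotProduct (-s) a z
  have hipsub : ∀ z, ip g' z = ip g z - t * ip a z := by
    intro z
    rw [hg']
    exact (sub_dotProduct g (t • a) z).trans (by rw [smul_dotProduct]; rfl)
  -- optimality
  have hopt : ip a x' = b := by
    have h1 := ht (t + (ip a x' - b))
    have h2 := h_fconj_le lam hlam f hf x' g' ((-(ip a x' - b)) • a) hx'
    have e : g' + (-(ip a x' - b)) • a = g - (t + (ip a x' - b)) • a := by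
      rw [hg']; module
    rw [e, ← h_fconj_eq f x' g' hx', hsum, hipn, hg'] at h2
    have : (ip a x' - b)^2 ≤ 0 := by nlinarith
    have := pow_eq_zero_iff (two_ne_zero) |>.mp (le_antisymm this (sq_nonneg _))
    linarith
  -- value
  have h1 := ht (ip a x - b)
  have h2 := h_fconj_le lam hlam f hf x g ((-(ip a x - b)) • a) hg
  have e : g + (-(ip a x - b)) • a = g - (ip a x - b) • a := by module
  rw [e, hsum, hipn] at h2
  rw [← hg', h_fconj_eq f x' g' hx'] at h1
  have h3 : |(ip a x - b) - t| ≤ 2 * lam * norm1 a := by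
    have e1 : (ip a x - b) - t = ∑ j, a j * ((g' j - x' j) - (g j - x j)) := by
      have : ∀ j, a j * ((g' j - x' j) - (g j - x j)) = a j * x j - a j * x' j - t * a j^2 := by
        intro j; rw [hg']; simp only [Pi.sub_apply, Pi.smul_apply, smul_eq_mul]; ring
      simp only [this, Finset.sum_sub_distrib, ← Finset.mul_sum, haa]
      rw [← hopt]; unfold ip; ring
    rw [e1]
    refine (Finset.abs_sum_le_sum_abs _ _).trans ?_
    unfold norm1
    rw [Finset.mul_sum]
    apply Finset.sum_le_sum
    intro j _
    rw [abs_mul]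
    have k1 := (h_sub lam hlam f hf x g hg j).1
    have k2 := (h_sub lam hlam f hf x' g' hx' j).1
    have k3 := abs_sub (g' j - x' j) (g j - x j)
    have := mul_le_mul_of_nonneg_left (k3.trans (add_le_add k2 k1)) (abs_nonneg (a j))
    linarith
  have h4 : ((ip a x - b) - t) * (b - ip a y) ≤ 2 * lam * norm1 a * |b - ip a y| :=
    (le_abs_self _).trans (by rw [abs_mul]; exact mul_le_mul_of_nonneg_right h3 (abs_nonneg _))
  have e3 : breg f g' x' y = f y - f x' - (ip g' y - ip g' x') :=
    congrArg (f y - f x' - ·) (dotProduct_sub g' y x')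
  have e4 : breg f g x y = f y - f x - (ip g y - ip g x) :=
    congrArg (f y - f x - ·) (dotProduct_sub g y x)
  have e5 := hipsub y
  nlinarith

theorem h_quantile {m : ℕ} (k : ℕ) (hk : 0 < k) (hkm : k < m) (y : Fin m → ℝ) :
    m - k ≤ (Finset.univ.filter (fun i => quantileAt k y ≤ y i)).card := by
  have hmono : Monotone (sortedVal y) := Tuple.monotone_sort y
  have h1 : quantileAt k y ≤ sortedVal y ⟨k, hkm⟩ := by
    unfold quantileAt
    rw [dif_pos ⟨hk, hkm⟩]
    have : sortedVal y ⟨k - 1, by omega⟩ ≤ sortedVal y ⟨k, hkm⟩ := hmono (by simp)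
    linarith
  have h2 : (Finset.Ici (⟨k, hkm⟩ : Fin m)).map (Tuple.sort y).toEmbedding ⊆
      Finset.univ.filter (fun i => quantileAt k y ≤ y i) := by
    intro i hi
    simp only [Finset.mem_map, Finset.mem_Ici, Equiv.coe_toEmbedding] at hi
    obtain ⟨j, hj, rfl⟩ := hi
    simp only [Finset.mem_filter, Finset.mem_univ, true_and]
    exact h1.trans (hmono hj)
  have := Finset.card_le_card h2
  simpa [Fin.card_Ici] using this

theorem h_enorm_nonneg {I : Type*} [Fintype I] (v : I → ℝ) : 0 ≤ enorm2 v := Real.sqrt_nonneg _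

theorem h_enorm_pos {I : Type*} [Fintype I] (v : I → ℝ) (hv : v ≠ 0) : 0 < enorm2 v := by
  obtain ⟨j, hj⟩ := Function.ne_iff.mp hv
  apply Real.sqrt_pos.mpr
  apply Finset.sum_pos' (fun i _ => sq_nonneg _)
  exact ⟨j, Finset.mem_univ _, by have : v j ≠ 0 := hj; positivity⟩

theorem h_enorm_zero {I : Type*} [Fintype I] : enorm2 (0 : I → ℝ) = 0 := by
  simp [enorm2]

theorem h_sigmaMax_nonneg {I J : Type*} [Fintype I] [Fintype J] (M : Matrix I J ℝ) :
    0 ≤ sigmaMax M := by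
  apply Real.sSup_nonneg
  rintro r ⟨x, _, rfl⟩
  exact div_nonneg (h_enorm_nonneg _) (h_enorm_nonneg _)

theorem h_sigmaMax {I J : Type*} [Fintype I] [Fintype J] (M : Matrix I J ℝ) (x : J → ℝ) :
    enorm2 (M.mulVec x) ≤ sigmaMax M * enorm2 x := by
  by_cases hx : x = 0
  · subst hx; simp [h_enorm_zero]
  rw [← div_le_iff₀ (h_enorm_pos x hx)]
  apply le_csSup
  · refine ⟨frobNorm M, ?_⟩
    rintro r ⟨z, hz, rfl⟩
    rw [div_le_iff₀ (h_enorm_pos z hz)]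
    have hF : frobNorm M * enorm2 z = Real.sqrt ((∑ i, ∑ j, (M i j) ^ 2) * ∑ j, z j ^ 2) :=
      (Real.sqrt_mul (Finset.sum_nonneg fun i _ => Finset.sum_nonneg fun j _ => sq_nonneg _) _).symm
    rw [hF]
    apply Real.sqrt_le_sqrt
    rw [Finset.sum_mul]
    apply Finset.sum_le_sum
    intro i _
    exact Finset.sum_mul_sq_le_sq_mul_sq _ _ _
  · exact ⟨x, hx, rfl⟩

theorem h_sigmaMin_nonneg {I J : Type*} [Fintype I] [Fintype J] (M : Matrix I J ℝ) :
    0 ≤ sigmaMin M := by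
  apply Real.sInf_nonneg
  rintro r ⟨x, _, rfl⟩
  exact div_nonneg (h_enorm_nonneg _) (h_enorm_nonneg _)

theorem h_sigmaMin {I J : Type*} [Fintype I] [Fintype J] (M : Matrix I J ℝ) (x : J → ℝ) :
    sigmaMin M * enorm2 x ≤ enorm2 (M.mulVec x) := by
  by_cases hx : x = 0
  · subst hx; simp [h_enorm_zero]
  rw [← le_div_iff₀ (h_enorm_pos x hx)]
  apply csInf_le
  · refine ⟨0, ?_⟩
    rintro r ⟨x, _, rfl⟩
    exact div_nonneg (h_enorm_nonneg _) (h_enorm_nonneg _)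
  · exact ⟨x, hx, rfl⟩

theorem h_tilde_nonneg {m n : ℕ} (A : Matrix (Fin m) (Fin n) ℝ) (k : ℕ) :
    0 ≤ sigmaTildeQBMin A k := by
  apply Real.sInf_nonneg
  rintro r ⟨I, J, _, _, rfl⟩
  exact h_sigmaMin_nonneg _

theorem h_tilde {m n : ℕ} (A : Matrix (Fin m) (Fin n) ℝ) (k : ℕ) (I : Finset (Fin m))
    (hI : I.card = k) (hn : 0 < n) (z : Fin n → ℝ) :
    sigmaTildeQBMin A k ^ 2 * ∑ j, z j ^ 2 ≤ ∑ i ∈ I, (ip (A i) z)^2 := by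
  have : Nonempty (Fin n) := ⟨⟨0, hn⟩⟩
  have h1 : sigmaTildeQBMin A k ≤ sigmaMin (subMat A I Finset.univ) := by
    apply csInf_le
    · refine ⟨0, ?_⟩
      rintro r ⟨I, J, _, _, rfl⟩
      exact h_sigmaMin_nonneg _
    · exact ⟨I, Finset.univ, hI, Finset.univ_nonempty, rfl⟩
  have h2 := h_sigmaMin (subMat A I Finset.univ) (fun j => z j)
  have h3 : sigmaTildeQBMin A k * enorm2 (fun j : {j // j ∈ (Finset.univ : Finset (Fin n))} => z j)
      ≤ enorm2 ((subMat A I Finset.univ).mulVec (fun j => z j)) :=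
    (mul_le_mul_of_nonneg_right h1 (h_enorm_nonneg _)).trans h2
  have h4 := pow_le_pow_left₀ (mul_nonneg (h_tilde_nonneg A k) (h_enorm_nonneg _)) h3 2
  rw [mul_pow, h_enorm_sq, h_enorm_sq] at h4
  have e1 : ∑ j : {j // j ∈ (Finset.univ : Finset (Fin n))}, z j ^ 2 = ∑ j, z j ^ 2 :=
    Finset.sum_coe_sort Finset.univ (fun j => z j ^ 2)
  have e2 : ∀ i : {i // i ∈ I}, (subMat A I Finset.univ).mulVec (fun j => z j) i = ip (A i) z := by
    intro i
    exact Finset.sum_coe_sort Finset.univ (fun j => A i j * z j)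
  simp only [e2] at h4
  rw [e1, Finset.sum_coe_sort I (fun i => (ip (A i) z)^2)] at h4
  exact h4

theorem h_normInf {m : ℕ} (r : Fin m → ℝ) (i : Fin m) : |r i| ≤ normInf r :=
  le_ciSup (f := fun i => |r i|) (Set.finite_range _).bddAbove i

theorem h_alg (sB u μ ν S d D e q p Q : ℝ) (hsB : 0 ≤ sB) (hu : 0 ≤ u) (hμ : 0 < μ)
    (hν : 0 < ν) (hS : 0 ≤ S) (hd : 0 ≤ d) (hD : d^2 ≤ 2 * D) (he : 0 ≤ e) (hq : 0 < q)
    (hp : 0 < p) (hQ0 : 0 ≤ Q) (hQ : Q * (p * μ^2) ≤ u * μ * S * d + u^2 * μ^2 * e) :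
    (1 / (q * μ^2)) * (Q * (sB * μ * S * d) + 1/2 * (sB^2 * μ^2) * Q^2) ≤
      ((2 * (sB * u) / (q * p)) * (S ^ 2 / μ^2 + u * S / (μ * ν)) +
        (sB^2 * u^2 / (q * p ^ 2)) * (S ^ 2 / μ^2 + 2 * u * S / (μ * ν))) * D +
      ((sB * u^2 / (q * p)) * (1 + (sB * u) / p) * (ν / μ) * S +
        (1 / 2) * (sB^2 * (u^2) ^ 2 / (q * p ^ 2))) * e^2 := by
  set K := S * d / μ with hK
  have hK0 : 0 ≤ K := by positivity
  have hD0 : 0 ≤ D := by nlinarith [sq_nonneg d]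
  have hR : Q ≤ (u * K + u^2 * e) / p := by
    rw [le_div_iff₀ hp, hK]
    have : Q * p * μ^2 ≤ (u * (S * d / μ) + u^2 * e) * μ^2 := by
      calc Q * p * μ^2 = Q * (p * μ^2) := by ring
        _ ≤ _ := hQ
        _ = _ := by field_simp
    exact le_of_mul_le_mul_right this (by positivity)
  have hX : K^2 ≤ 2 * D * (S^2 / μ^2) := by
    have : K^2 = d^2 * (S^2 / μ^2) := by rw [hK]; field_simp
    rw [this]; exact mul_le_mul_of_nonneg_right hD (by positivity)
  have hY : K * e ≤ S / μ * (2 * D / ν + ν * e^2) := by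
    have : K * e = S / μ * (d * e) := by rw [hK]; ring
    rw [this]
    apply mul_le_mul_of_nonneg_left _ (by positivity)
    rw [div_add' _ _ _ hν.ne', le_div_iff₀ hν]
    nlinarith [sq_nonneg (d - ν * e), sq_nonneg (ν * e)]
  have hQ2 : Q^2 ≤ ((u * K + u^2 * e) / p)^2 := pow_le_pow_left₀ hQ0 hR 2
  calc (1 / (q * μ^2)) * (Q * (sB * μ * S * d) + 1/2 * (sB^2 * μ^2) * Q^2)
      = (1/q) * (sB * K * Q + 1/2 * sB^2 * Q^2) := by rw [hK]; field_simp
    _ ≤ (1/q) * (sB * K * ((u * K + u^2 * e) / p) + 1/2 * sB^2 * ((u * K + u^2 * e) / p)^2) := by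
        gcongr
    _ = (1/q) * (sB * u / p * K^2 + sB * u^2 / p * (K * e) + sB^2 * u^2 / (2 * p^2) * K^2
          + sB^2 * u^3 / p^2 * (K * e) + 1/2 * sB^2 * u^4 / p^2 * e^2) := by
        field_simp; ring
    _ ≤ (1/q) * (sB * u / p * (2 * D * (S^2 / μ^2)) + sB * u^2 / p * (S / μ * (2 * D / ν + ν * e^2))
          + sB^2 * u^2 / (2 * p^2) * (2 * D * (S^2 / μ^2))
          + sB^2 * u^3 / p^2 * (S / μ * (2 * D / ν + ν * e^2)) + 1/2 * sB^2 * u^4 / p^2 * e^2) := by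
        gcongr
    _ = _ := by field_simp; ring

/-- Cauchy–Schwarz on a subset of the rows. -/
theorem h_cs {m : ℕ} (h : Fin m → ℝ) (B : Finset (Fin m)) (c M : ℝ) (hc : 0 ≤ c) (hM : 0 ≤ M)
    (hB : (B.card : ℝ) ≤ c^2) (hh : ∑ i, h i ^ 2 ≤ M^2) : ∑ i ∈ B, |h i| ≤ c * M := by
  apply abs_le_of_sq_le_sq' _ (by positivity) |>.2
  have h1 : (∑ i ∈ B, |h i|)^2 ≤ B.card * ∑ i ∈ B, |h i|^2 := sq_sum_le_card_mul_sum_sq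
  simp only [sq_abs] at h1
  have h2 : ∑ i ∈ B, h i ^ 2 ≤ ∑ i, h i ^ 2 :=
    Finset.sum_le_sum_of_subset_of_nonneg (Finset.subset_univ _) fun i _ _ => sq_nonneg _
  have h3 : 0 ≤ ∑ i ∈ B, h i ^ 2 := Finset.sum_nonneg fun i _ => sq_nonneg _
  calc (∑ i ∈ B, |h i|)^2 ≤ B.card * ∑ i ∈ B, h i^2 := h1
    _ ≤ c^2 * M^2 := mul_le_mul hB (h2.trans hh) h3 (by positivity)
    _ = _ := by ring

set_option maxHeartbeats 2000000 in
/-- one-step expectation bound for Quantile-RaSK with exact step,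
Theorem 3.2(b). -/
theorem stmt11 {m n : ℕ} (lam : ℝ) (hlam : 0 < lam)
    (f : (Fin n → ℝ) → ℝ)
    (hf : f = fun x => lam * norm1 x + (1 / 2) * enorm2 x ^ 2)
    (A : Matrix (Fin m) (Fin n) ℝ)
    (hrank : A.rank = min m n) (hrows : ∀ i, enorm2 (A i) = 1)
    (q β : ℝ) (hβq : β < q) (hq : q < 1 - β)
    (kq kb kqb : ℕ)
    (hkq : (kq : ℝ) = q * m) (hkb : (kb : ℝ) = β * m) (hkqb : (kqb : ℝ) = (q - β) * m)
    (xhat : Fin n → ℝ) (hAx : A.mulVec xhat ≠ 0)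
    (hmin : ∀ z, A.mulVec z = A.mulVec xhat → z ≠ xhat → f xhat < f z)
    (bc r : Fin m → ℝ)
    (hbc : (Finset.univ.filter (fun i => bc i ≠ 0)).card = kb)
    (b : Fin m → ℝ) (hb : b = A.mulVec xhat + bc + r)
    (αc : ℝ) (hαc : αc = xminOf xhat / (xminOf xhat + 2 * lam))
    -- condition (♦)
    (hcond :
      (2 * Real.sqrt (β * (1 - β)) / (1 - β - q)) *
          (sigmaMax A + Real.sqrt ((1 - β) * m / n)) +
        (β * (1 - β) / (1 - β - q) ^ 2) *
          (sigmaMax A + 2 * Real.sqrt ((1 - β) * m / n)) <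
      (αc * (q - β) / (2 * q)) * (sigmaTildeQBMin A kqb) ^ 2 / sigmaMax A)
    (x xs : Fin n → ℝ) (hxs : xs ∈ subdiff f x)
    (hrange : ∃ u : Fin m → ℝ, xs = A.transpose.mulVec u)
    (Q : ℝ) (hQ : Q = quantileAt kq (fun i => |ip (A i) x - b i|))
    (N2 : Finset (Fin m)) (hN2 : N2 = Finset.univ.filter (fun i => |ip (A i) x - b i| ≤ Q))
    (hN2card : N2.card = kq)
    -- exact-step update
    (t : Fin m → ℝ)
    (ht : ∀ i ∈ N2, ∀ s : ℝ,
      fconj f (xs - t i • A i) + t i * b i ≤ fconj f (xs - s • A i) + s * b i)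
    (xs' x' : Fin m → (Fin n → ℝ))
    (hxs' : ∀ i ∈ N2, xs' i = xs - t i • A i)
    (hx' : ∀ i ∈ N2, xs' i ∈ subdiff f (x' i))
    (C1 C2 : ℝ)
    (hC1 : C1 = (αc * (q - β) / (2 * q ^ 2)) * (sigmaTildeQBMin A kqb) ^ 2 / m -
        (2 * Real.sqrt (β * (1 - β)) / (q * (1 - β - q))) *
          ((sigmaMax A) ^ 2 / m + Real.sqrt (1 - β) * sigmaMax A / Real.sqrt (m * n)) -
        (β * (1 - β) / (q * (1 - β - q) ^ 2)) *
          ((sigmaMax A) ^ 2 / m + 2 * Real.sqrt (1 - β) * sigmaMax A / Real.sqrt (m * n)))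
    (hC2 : C2 = (Real.sqrt β * (1 - β) / (q * (1 - β - q))) *
          (1 + Real.sqrt (β * (1 - β)) / (1 - β - q)) * Real.sqrt (n / m) * sigmaMax A +
        (1 / 2) * (β * (1 - β) ^ 2 / (q * (1 - β - q) ^ 2)) + 1 / 2) :
    (1 / (q * m)) * ∑ i ∈ N2, breg f (xs' i) (x' i) xhat ≤
      (1 - C1) * breg f xs x xhat + C2 * normInf r ^ 2 +
        (2 / Real.sqrt (q * m)) * normInf r * norm12 A +
        (2 * lam / (q * m)) * enorm2 (b - A.mulVec xhat) * norm12 A := by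
  have hxhat0 : xhat ≠ 0 := by
    rintro rfl; exact hAx (Matrix.mulVec_zero A)
  obtain ⟨i0, -⟩ := Function.ne_iff.mp hAx
  obtain ⟨j0, -⟩ := Function.ne_iff.mp hxhat0
  have hmN : 0 < m := i0.pos
  have hnN : 0 < n := j0.pos
  have hm : (0:ℝ) < m := by exact_mod_cast hmN
  have hn : (0:ℝ) < n := by exact_mod_cast hnN
  have hβ : 0 ≤ β := by
    have : 0 ≤ β * m := by rw [← hkb]; positivity
    exact nonneg_of_mul_nonneg_left this hm
  have hq0 : 0 < q := by linarith
  have hu1 : 0 < 1 - β := by linarith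
  have hp : 0 < 1 - β - q := by linarith
  have hkq0 : 0 < kq := by
    have : (0:ℝ) < kq := by rw [hkq]; positivity
    exact_mod_cast this
  have hsumk : kqb + kb = kq := by
    have : (kqb:ℝ) + kb = kq := by rw [hkq, hkb, hkqb]; ring
    exact_mod_cast this
  have hkqm' : (kq:ℝ) + kb < m := by rw [hkq, hkb]; nlinarith
  have hkqm : kq + kb < m := by exact_mod_cast hkqm'
  set ρ : Fin m → ℝ := fun i => ip (A i) x - b i with hρ
  set h : Fin m → ℝ := fun i => ip (A i) x - ip (A i) xhat with hh
  set S := sigmaMax A with hS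
  set e := normInf r with he
  set D := breg f xs x xhat with hD
  set d := enorm2 (x - xhat) with hd
  have hS0 : 0 ≤ S := h_sigmaMax_nonneg A
  have hd0 : 0 ≤ d := h_enorm_nonneg _
  have he0 : 0 ≤ e := (abs_nonneg (r i0)).trans (h_normInf r i0)
  have hd2 : d^2 = ∑ j, (x j - xhat j)^2 := h_enorm_sq _
  have hdD : d^2 ≤ 2 * D := by
    have := h_breg_lower lam hlam f hf x xs xhat hxs
    rw [← hd2] at this; linarith
  have hD0 : 0 ≤ D := by nlinarith [sq_nonneg d]
  have hαD : αc * D ≤ d^2 := by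
    rw [hd2, hαc]; exact h_err lam hlam f hf x xs xhat hxs hxhat0
  have hα0 : 0 ≤ αc := by
    have := (h_xmin xhat hxhat0).1
    rw [hαc]; positivity
  have hhi : ∀ i, ip (A i) (x - xhat) = h i := fun i => dotProduct_sub (A i) x xhat
  have hhS : ∑ i, h i ^ 2 ≤ (S * d)^2 := by
    have h1 := pow_le_pow_left₀ (h_enorm_nonneg _) (h_sigmaMax A (x - xhat)) 2
    rw [h_enorm_sq] at h1
    have e1 : ∀ i, A.mulVec (x - xhat) i = h i := hhi
    simpa only [e1] using h1
  have hbi : ∀ i, b i = ip (A i) xhat + bc i + r i := by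
    intro i; rw [hb]; rfl
  have hρh : ∀ i, bc i = 0 → ρ i = h i - r i := by
    intro i hi
    simp only [hρ, hh]; rw [hbi i, hi]; ring
  have hmem : ∀ i ∈ N2, |ρ i| ≤ Q := by
    intro i hi; rw [hN2] at hi; exact (Finset.mem_filter.mp hi).2
  have hQ0 : 0 ≤ Q := by
    have : N2.Nonempty := by rw [← Finset.card_pos, hN2card]; exact hkq0
    obtain ⟨i, hi⟩ := this
    exact (abs_nonneg _).trans (hmem i hi)
  -- square roots
  have hsB2 : Real.sqrt β ^ 2 = β := Real.sq_sqrt hβ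
  have hu2 : Real.sqrt (1 - β) ^ 2 = 1 - β := Real.sq_sqrt hu1.le
  have hμ2 : Real.sqrt m ^ 2 = m := Real.sq_sqrt hm.le
  have hμ0 : 0 < Real.sqrt m := Real.sqrt_pos.mpr hm
  have hν0 : 0 < Real.sqrt n := Real.sqrt_pos.mpr hn
  -- bound on Q
  set U := Finset.univ.filter (fun i : Fin m => bc i = 0) with hU
  set V := Finset.univ.filter (fun i : Fin m => bc i ≠ 0) with hV
  have hUV : U.card + V.card = m := by
    have := Finset.card_filter_add_card_filter_not (s := (Finset.univ : Finset (Fin m))) (fun i => bc i = 0)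
    simpa using this
  have hUc : (U.card : ℝ) = (1 - β) * m := by
    have : (U.card : ℝ) + V.card = m := by exact_mod_cast hUV
    rw [hbc, hkb] at this; linarith
  have hQb : Q * ((1 - β - q) * Real.sqrt m ^ 2) ≤
      Real.sqrt (1 - β) * Real.sqrt m * S * d + Real.sqrt (1 - β) ^ 2 * Real.sqrt m ^ 2 * e := by
    have hW := h_quantile kq hkq0 (by omega) (fun i => |ip (A i) x - b i|)
    rw [← hQ] at hW
    set W := Finset.univ.filter (fun i => Q ≤ |ip (A i) x - b i|) with hWd
    have hTc : m - kq - kb ≤ (W \ V).card := by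
      have := Finset.le_card_sdiff V W
      omega
    have hTU : W \ V ⊆ U := by
      intro i hi
      simp only [Finset.mem_sdiff, hV, hU, Finset.mem_filter, Finset.mem_univ, true_and, not_not] at hi ⊢
      exact hi.2
    have hTc' : (1 - β - q) * m ≤ ((W \ V).card : ℝ) := by
      have : m ≤ (W \ V).card + kq + kb := by omega
      have : (m:ℝ) ≤ (W \ V).card + kq + kb := by exact_mod_cast this
      rw [hkq, hkb] at this; linarith
    have hcs := h_cs h U (Real.sqrt (1 - β) * Real.sqrt m) (S * d) (by positivity) (by positivity)
      (by rw [mul_pow, hu2, hμ2, hUc]) hhS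
    have hre : ∑ i ∈ U, |r i| ≤ U.card * e := by
      rw [← nsmul_eq_mul]; exact Finset.sum_le_card_nsmul _ _ _ fun i _ => h_normInf r i
    rw [hUc] at hre
    rw [hu2, hμ2]
    calc Q * ((1 - β - q) * m) ≤ Q * (W \ V).card := mul_le_mul_of_nonneg_left hTc' hQ0
      _ = ∑ i ∈ W \ V, Q := by rw [Finset.sum_const, nsmul_eq_mul]; ring
      _ ≤ ∑ i ∈ W \ V, (|h i| + |r i|) := by
          apply Finset.sum_le_sum
          intro i hi
          have h1 : Q ≤ |ρ i| := (Finset.mem_filter.mp (Finset.mem_sdiff.mp hi).1).2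
          rw [hρh i (Finset.mem_filter.mp (hTU hi)).2] at h1
          exact h1.trans (abs_sub _ _)
      _ ≤ ∑ i ∈ U, (|h i| + |r i|) :=
          Finset.sum_le_sum_of_subset_of_nonneg hTU fun i _ _ => by positivity
      _ ≤ _ := by rw [Finset.sum_add_distrib]; linarith
  -- step bound
  have hstep : ∀ i ∈ N2, breg f (xs' i) (x' i) xhat ≤ D + (-(ρ i * h i) + 1/2 * ρ i ^ 2)
      + 2 * lam * (norm1 (A i) * |b i - ip (A i) xhat|) := by
    intro i hi
    have := h_step lam hlam f hf x xs (A i) (xs' i) (x' i) xhat (t i) (b i) hxs (hrows i)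
      (ht i hi) (hxs' i hi) (hx' i hi)
    simp only [hρ, hh, hD]; linarith
  -- good rows
  set G := N2.filter (fun i => bc i = 0) with hG
  set B := N2.filter (fun i => ¬ bc i = 0) with hB
  have hGB : G.card + B.card = kq := by
    rw [← hN2card]; exact Finset.card_filter_add_card_filter_not _
  have hBc : B.card ≤ kb := by
    rw [← hbc]; exact Finset.card_le_card (Finset.filter_subset_filter _ (Finset.subset_univ _))
  obtain ⟨I, hIG, hIc⟩ := Finset.exists_subset_card_eq (s := G) (n := kqb) (by omega)
  have hσ := h_tilde A kqb I hIc hnN (x - xhat)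
  set σ := sigmaTildeQBMin A kqb with hσd
  have hσ1 : σ^2 * d^2 ≤ ∑ i ∈ I, h i ^ 2 := by
    rw [hd2]; simpa only [hhi, Pi.sub_apply] using hσ
  have hσ2 : σ^2 * (αc * D) ≤ ∑ i ∈ G, h i ^ 2 :=
    (mul_le_mul_of_nonneg_left hαD (sq_nonneg _)).trans (hσ1.trans
      (Finset.sum_le_sum_of_subset_of_nonneg hIG fun i _ _ => sq_nonneg _))
  have hGs : ∑ i ∈ G, (-(ρ i * h i) + 1/2 * ρ i ^ 2) ≤ -(1/2) * (σ^2 * (αc * D)) + 1/2 * (q * m) * e^2 := by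
    have h1 : ∑ i ∈ G, (-(ρ i * h i) + 1/2 * ρ i ^ 2) ≤ ∑ i ∈ G, (-(1/2) * h i ^ 2 + 1/2 * e^2) := by
      apply Finset.sum_le_sum
      intro i hi
      rw [hρh i (Finset.mem_filter.mp hi).2]
      have : r i ^ 2 ≤ e^2 := by
        rw [← sq_abs (r i)]; exact pow_le_pow_left₀ (abs_nonneg _) (h_normInf r i) 2
      nlinarith
    refine h1.trans ?_
    rw [Finset.sum_add_distrib, ← Finset.mul_sum, Finset.sum_const, nsmul_eq_mul]
    have h2 : (G.card : ℝ) ≤ q * m := by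
      rw [← hkq]; exact_mod_cast (by omega : G.card ≤ kq)
    have h3 := mul_le_mul_of_nonneg_right h2 (by positivity : 0 ≤ 1/2 * e^2)
    linarith
  have hBs : ∑ i ∈ B, (-(ρ i * h i) + 1/2 * ρ i ^ 2) ≤
      Q * (Real.sqrt β * Real.sqrt m * S * d) + 1/2 * (Real.sqrt β ^ 2 * Real.sqrt m ^ 2) * Q^2 := by
    have h1 : ∑ i ∈ B, (-(ρ i * h i) + 1/2 * ρ i ^ 2) ≤ ∑ i ∈ B, (Q * |h i| + 1/2 * Q^2) := by
      apply Finset.sum_le_sum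
      intro i hi
      have k1 := hmem i (Finset.mem_filter.mp hi).1
      have k2 : ρ i ^ 2 ≤ Q^2 := by
        rw [← sq_abs (ρ i)]; exact pow_le_pow_left₀ (abs_nonneg _) k1 2
      have k3 : -(ρ i * h i) ≤ |ρ i| * |h i| := by rw [← abs_mul]; exact neg_le_abs _
      have k4 := mul_le_mul_of_nonneg_right k1 (abs_nonneg (h i))
      linarith
    refine h1.trans ?_
    rw [Finset.sum_add_distrib, ← Finset.mul_sum, Finset.sum_const, nsmul_eq_mul]
    have h2 : (B.card : ℝ) ≤ β * m := by
      rw [← hkb]; exact_mod_cast hBc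
    have h3 := mul_le_mul_of_nonneg_right h2 (by positivity : 0 ≤ 1/2 * Q^2)
    have hcs := h_cs h B (Real.sqrt β * Real.sqrt m) (S * d) (by positivity) (by positivity)
      (by rw [mul_pow, hsB2, hμ2]; exact h2) hhS
    have h4 := mul_le_mul_of_nonneg_left hcs hQ0
    rw [hsB2, hμ2]
    linarith
  have hsplit : ∑ i ∈ N2, (-(ρ i * h i) + 1/2 * ρ i ^ 2) =
      ∑ i ∈ G, (-(ρ i * h i) + 1/2 * ρ i ^ 2) + ∑ i ∈ B, (-(ρ i * h i) + 1/2 * ρ i ^ 2) :=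
    (Finset.sum_filter_add_sum_filter_not _ _ _).symm
  -- extra term
  have hex : ∑ i ∈ N2, norm1 (A i) * |b i - ip (A i) xhat| ≤ enorm2 (b - A.mulVec xhat) * norm12 A := by
    have h1 : ∑ i ∈ N2, norm1 (A i) * |b i - ip (A i) xhat| ≤ ∑ i, norm1 (A i) * |b i - ip (A i) xhat| :=
      Finset.sum_le_sum_of_subset_of_nonneg (Finset.subset_univ _) fun i _ _ =>
        mul_nonneg (Finset.sum_nonneg fun j _ => abs_nonneg _) (abs_nonneg _)
    refine h1.trans ?_
    have h2 := Real.sum_mul_le_sqrt_mul_sqrt Finset.univ (fun i => norm1 (A i)) (fun i => |b i - ip (A i) xhat|)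
    refine h2.trans (le_of_eq ?_)
    simp only [sq_abs]
    rw [mul_comm]; rfl
  have halg := h_alg (Real.sqrt β) (Real.sqrt (1 - β)) (Real.sqrt m) (Real.sqrt n) S d D e q (1 - β - q) Q
    (Real.sqrt_nonneg _) (Real.sqrt_nonneg _) hμ0 hν0 hS0 hd0 hdD he0 hq0 hp hQ0 hQb
  have hN : 0 ≤ norm12 A := Real.sqrt_nonneg _
  have hslack : 0 ≤ (2 / Real.sqrt (q * m)) * e * norm12 A := by positivity
  have hqm : 0 < q * m := by positivity
  have htot : ∑ i ∈ N2, breg f (xs' i) (x' i) xhat ≤ q * m * D +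
      (-(1/2) * (σ^2 * (αc * D)) + 1/2 * (q * m) * e^2 +
      (Q * (Real.sqrt β * Real.sqrt m * S * d) + 1/2 * (Real.sqrt β ^ 2 * Real.sqrt m ^ 2) * Q^2)) +
      2 * lam * (enorm2 (b - A.mulVec xhat) * norm12 A) := by
    have h1 := Finset.sum_le_sum hstep
    rw [Finset.sum_add_distrib, Finset.sum_add_distrib, Finset.sum_const, nsmul_eq_mul, hN2card, hkq,
      ← Finset.mul_sum, hsplit] at h1
    have h2 := mul_le_mul_of_nonneg_left hex (by positivity : 0 ≤ 2 * lam)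
    linarith
  have htot2 := mul_le_mul_of_nonneg_left htot (by positivity : 0 ≤ 1 / (q * m))
  have hfirst : (αc * (q - β) / (2 * q ^ 2)) * σ ^ 2 / m * D ≤ 1 / (q * m) * (1/2 * (σ^2 * (αc * D))) := by
    have e1 : (αc * (q - β) / (2 * q ^ 2)) * σ ^ 2 / m * D =
      ((q - β) / q) * (1 / (q * m) * (1/2 * (σ^2 * (αc * D)))) := by field_simp
    rw [e1]
    apply mul_le_of_le_one_left (by positivity)
    rw [div_le_one hq0]; linarith
  have r1 : Real.sqrt (β * (1 - β)) = Real.sqrt β * Real.sqrt (1 - β) := Real.sqrt_mul hβ _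
  have r2 : Real.sqrt ((m:ℝ) * n) = Real.sqrt m * Real.sqrt n := Real.sqrt_mul hm.le _
  have r3 : Real.sqrt ((n:ℝ) / m) = Real.sqrt n / Real.sqrt m := Real.sqrt_div hn.le _
  rw [hsB2, hu2, hμ2] at halg
  rw [hsB2, hμ2] at htot2
  rw [hC1, hC2, r1, r2, r3]
  have e2 : 1 / (q * m) * (q * m * D +
      (-(1/2) * (σ^2 * (αc * D)) + 1/2 * (q * m) * e^2 +
      (Q * (Real.sqrt β * Real.sqrt m * S * d) + 1/2 * (β * m) * Q^2)) +
      2 * lam * (enorm2 (b - A.mulVec xhat) * norm12 A)) =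
      D - 1 / (q * m) * (1/2 * (σ^2 * (αc * D))) + 1/2 * e^2 +
      1 / (q * m) * (Q * (Real.sqrt β * Real.sqrt m * S * d) + 1/2 * (β * m) * Q^2) +
      (2 * lam / (q * m)) * enorm2 (b - A.mulVec xhat) * norm12 A := by
    field_simp; ring
  rw [e2] at htot2
  linarith
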